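/- There exist absolute constants c > 0 and c' > 0 such that, in the convex-aggregation setting of the context with probe set Ψ̃_{Λ_ε} and with card(Λ_ε) ≤ (c'/ε)^N, the selected estimator F̂ satisfies E‖F̂ − f‖_p ≤ 3·min_{λ∈Λ} ‖f − F_λ‖_p + c·Q₁(p)·ε·√(N ln(1/ε)) + 6Lε, where Q₁(p) = 1 for p ∈ [1,2] and Q₁(p) = max_{λ,ν∈Λ_ε, F_λ≠F_ν} (‖Σ_i(λ_i − ν_i)f_i‖_{2p−2}/‖Σ_i(λ_i − ν_i)f_i‖_p)^{p−1} for p ∈ (2,∞). -/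

import Mathlib

open MeasureTheory
open scoped ENNReal

/-- Lebesgue measure restricted to the unit cube `[0,1]^d`. -/
noncomputable def cubeMeasure (d : ℕ) : Measure (Fin d → ℝ) :=
  volume.restrict (Set.Icc 0 1)

/-- The real-valued `L^r` norm on the unit cube. -/
noncomputable def Lnorm {d : ℕ} (r : ℝ≥0∞) (g : (Fin d → ℝ) → ℝ) : ℝ :=
  (eLpNorm g r (cubeMeasure d)).toReal

/-- The simplex `Λ = {λ : λ_i ≥ 0, Σ λ_i ≤ 1}` in `ℝ^N`. -/
def simplex (N : ℕ) : Set (Fin N → ℝ) :=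
  {l | (∀ i, 0 ≤ l i) ∧ ∑ i, l i ≤ 1}

open ProbabilityTheory
open scoped NNReal

/-! The probe `ψ_g` is a norm-one functional on `L^p` that norms `g`. Let
`R = ∑ (|Z(ψ)| - κ ‖ψ‖₂)₊` be the excess of the noise over its threshold. The criterion at `λ` is
at most `‖f - F_λ‖ + ε R`; conversely a criterion value `m` at `λ` forces
`|∫ ψ (f - F_λ)| ≤ m + 2 ε κ ‖ψ‖₂ + ε R` for every probe. Replacing `λ̂` and a competitor `λ` by
points of the net, whose difference is normed by one of the probes, turns the minimality of `λ̂`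
into `‖F̂ - f‖ ≤ 3 ‖f - F_λ‖ + 4 L ε + 2 ε κ max ‖ψ‖₂ + 2 ε R`. A Chernoff bound for each of the
at most `n_ε²` terms of `R` gives `E R ≤ 2 n_ε² max ‖ψ‖₂ exp(-κ² / 2) / κ = 2 ε max ‖ψ‖₂ / κ`, and
the cardinality of the net gives `κ = O(√(N ln(1/ε)))`. -/

section Selection

variable {E : Type*} [SeminormedAddCommGroup E] [NormedSpace ℝ E] {J : Type*}

/-- The selection criterion at a residual `x`, observed through the functionals `φ j` with
noise `z j`, where a discrepancy below the threshold `τ j` is forgiven. -/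
noncomputable def noisyDiscrepancy (φ : J → StrongDual ℝ E) (z τ : J → ℝ) (x : E) : ℝ :=
  ⨆ j, (|φ j x + z j| - τ j)

variable {φ : J → StrongDual ℝ E} {z τ : J → ℝ} {r : ℝ}

lemma abs_apply_le_norm_of_opNorm_le_one {φ : StrongDual ℝ E} (hφ : ‖φ‖ ≤ 1) (x : E) :
    |φ x| ≤ ‖x‖ := by
  simpa using φ.le_of_opNorm_le hφ x

lemma noisyDiscrepancy_le_norm_add (hφ : ∀ j, ‖φ j‖ ≤ 1) (hr : 0 ≤ r)
    (hz : ∀ j, |z j| ≤ τ j + r) (x : E) : noisyDiscrepancy φ z τ x ≤ ‖x‖ + r := by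
  refine Real.iSup_le (fun j => ?_) (by positivity)
  linarith [abs_add_le (φ j x) (z j), abs_apply_le_norm_of_opNorm_le_one (hφ j) x, hz j]

lemma abs_apply_le_noisyDiscrepancy_add [Finite J] {j : J} (hz : |z j| ≤ τ j + r) (x : E) :
    |φ j x| ≤ noisyDiscrepancy φ z τ x + 2 * τ j + r := by
  have hj : |φ j x + z j| - τ j ≤ noisyDiscrepancy φ z τ x :=
    le_ciSup (f := fun j => |φ j x + z j| - τ j) (Set.finite_range _).bddAbove j
  have htri : |φ j x| ≤ |φ j x + z j| + |z j| := by simpa using abs_sub (φ j x + z j) (z j)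
  linarith

lemma apply_sub_le_of_noisyDiscrepancy_le [Finite J] (hφ : ∀ j, ‖φ j‖ ≤ 1) (hr : 0 ≤ r)
    (hz : ∀ j, |z j| ≤ τ j + r) {f x y : E}
    (hmin : noisyDiscrepancy φ z τ (f - y) ≤ noisyDiscrepancy φ z τ (f - x)) (j : J) :
    φ j (y - x) ≤ 2 * ‖f - x‖ + 2 * τ j + 2 * r := by
  have hx := abs_apply_le_norm_of_opNorm_le_one (hφ j) (f - x)
  have hy := abs_apply_le_noisyDiscrepancy_add (φ := φ) (hz j) (f - y)
  have hle := noisyDiscrepancy_le_norm_add hφ hr hz (f - x)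
  have hsplit : φ j (y - x) = φ j (f - x) - φ j (f - y) := by rw [← map_sub]; congr 1; abel
  linarith [le_abs_self (φ j (f - x)), neg_abs_le (φ j (f - y))]

lemma norm_sub_le_of_noisyDiscrepancy_le [Finite J] (hφ : ∀ j, ‖φ j‖ ≤ 1) (hr : 0 ≤ r)
    (hz : ∀ j, |z j| ≤ τ j + r) {T : ℝ} (hT : 0 ≤ T) (hτ : ∀ j, τ j ≤ T) {f x y a b : E} {η : ℝ}
    (hmin : noisyDiscrepancy φ z τ (f - y) ≤ noisyDiscrepancy φ z τ (f - x))
    (hxa : ‖x - a‖ ≤ η) (hyb : ‖y - b‖ ≤ η)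
    (hnorming : ‖b - a‖ ≠ 0 → ∃ j, φ j (b - a) = ‖b - a‖) :
    ‖y - f‖ ≤ 3 * ‖f - x‖ + 4 * η + 2 * T + 2 * r := by
  have hba : ‖b - a‖ ≤ 2 * η + 2 * ‖f - x‖ + 2 * T + 2 * r := by
    rcases eq_or_ne ‖b - a‖ 0 with h0 | h0
    · have := (norm_nonneg _).trans hxa
      rw [h0]; positivity
    obtain ⟨j, hj⟩ := hnorming h0
    have hsplit : φ j (b - a) = φ j (y - x) + φ j (x - a) - φ j (y - b) := by
      rw [← map_add, ← map_sub]; congr 1; abel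
    linarith [apply_sub_le_of_noisyDiscrepancy_le hφ hr hz hmin j, hτ j,
      (le_abs_self _).trans (abs_apply_le_norm_of_opNorm_le_one (hφ j) (x - a)),
      (neg_le_abs _).trans (abs_apply_le_norm_of_opNorm_le_one (hφ j) (y - b))]
  calc ‖y - f‖ = ‖(y - b) + (b - a) - (x - a) - (f - x)‖ := by congr 1; abel
    _ ≤ ‖y - b‖ + ‖b - a‖ + ‖x - a‖ + ‖f - x‖ :=
        norm_sub_le_of_le (norm_sub_le_of_le (norm_add_le _ _) le_rfl) le_rfl
    _ ≤ 3 * ‖f - x‖ + 4 * η + 2 * T + 2 * r := by linarith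

end Selection

section Noise

variable {Ω J : Type*} [Fintype J]

/-- The total amount by which the noise variables `Z j` of levels `σ j` exceed `κ σ j`. -/
noncomputable def noiseExcess (κ : ℝ) (σ : J → ℝ≥0) (Z : J → Ω → ℝ) (ω : Ω) : ℝ :=
  ∑ j, max (|Z j ω| - κ * σ j) 0

lemma noiseExcess_nonneg (κ : ℝ) (σ : J → ℝ≥0) (Z : J → Ω → ℝ) (ω : Ω) :
    0 ≤ noiseExcess κ σ Z ω :=
  Finset.sum_nonneg fun _ _ => le_max_right _ _

lemma abs_le_add_noiseExcess (κ : ℝ) (σ : J → ℝ≥0) (Z : J → Ω → ℝ) (ω : Ω) (j : J) :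
    |Z j ω| ≤ κ * σ j + noiseExcess κ σ Z ω := by
  have hj : max (|Z j ω| - κ * σ j) 0 ≤ noiseExcess κ σ Z ω :=
    Finset.single_le_sum (f := fun j => max (|Z j ω| - κ * σ j) 0)
      (fun _ _ => le_max_right _ _) (Finset.mem_univ j)
  linarith [le_max_left (|Z j ω| - κ * σ j) 0]

variable [MeasurableSpace Ω] {P : Measure Ω}

lemma hasSubgaussianMGF_of_map_eq_gaussianReal {X : Ω → ℝ} {v : ℝ≥0}
    (hX : P.map X = gaussianReal 0 v) : HasSubgaussianMGF X v P where
  integrable_exp_mul t := by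
    have hXm : AEMeasurable X P := aemeasurable_of_map_neZero (by rw [hX]; infer_instance)
    have hint : Integrable (fun x => Real.exp (t * x)) (P.map X) :=
      hX ▸ integrable_exp_mul_gaussianReal t
    exact hint.comp_aemeasurable hXm
  mgf_le t := by simp [mgf_gaussianReal hX]

lemma max_zero_le_inv_mul_exp {l : ℝ} (hl : 0 < l) (y : ℝ) :
    max y 0 ≤ l⁻¹ * Real.exp (l * y) := by
  have := Real.add_one_le_exp (l * y)
  refine max_le ((le_inv_mul_iff₀ hl).2 ?_) (by positivity)
  linarith

variable [IsProbabilityMeasure P]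

lemma integrable_max_abs_sub {X : Ω → ℝ} {c : ℝ≥0}
    (hX : HasSubgaussianMGF X c P) (t : ℝ) : Integrable (fun ω => max (|X ω| - t) 0) P :=
  (hX.integrable.abs.sub (integrable_const t)).pos_part

lemma integral_max_abs_sub_le_exp {X : Ω → ℝ} {c : ℝ≥0} (hX : HasSubgaussianMGF X c P) (t : ℝ)
    {l : ℝ} (hl : 0 < l) :
    ∫ ω, max (|X ω| - t) 0 ∂P ≤ 2 / l * Real.exp (c * l ^ 2 / 2 - l * t) := by
  have hexp (s : ℝ) := hX.integrable_exp_mul s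
  calc ∫ ω, max (|X ω| - t) 0 ∂P
      ≤ ∫ ω, l⁻¹ * Real.exp (-(l * t)) * (Real.exp (l * X ω) + Real.exp (-l * X ω)) ∂P := by
        refine integral_mono (integrable_max_abs_sub hX t)
          (((hexp l).add (hexp (-l))).const_mul _) fun ω => ?_
        calc max (|X ω| - t) 0 ≤ l⁻¹ * Real.exp (l * (|X ω| - t)) := max_zero_le_inv_mul_exp hl _
          _ = l⁻¹ * Real.exp (-(l * t)) * Real.exp |l * X ω| := by
            rw [mul_assoc, ← Real.exp_add, abs_mul, abs_of_pos hl]; ring_nf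
          _ ≤ l⁻¹ * Real.exp (-(l * t)) * (Real.exp (l * X ω) + Real.exp (-l * X ω)) := by
            rw [neg_mul]; gcongr; exact Real.exp_abs_le _
    _ = l⁻¹ * Real.exp (-(l * t)) * (mgf X P l + mgf X P (-l)) := by
        rw [integral_const_mul, integral_add (hexp l) (hexp (-l))]; rfl
    _ ≤ l⁻¹ * Real.exp (-(l * t)) * (Real.exp (c * l ^ 2 / 2) + Real.exp (c * l ^ 2 / 2)) := by
        gcongr
        · exact hX.mgf_le l
        · simpa using hX.mgf_le (-l)
    _ = 2 / l * Real.exp (c * l ^ 2 / 2 - l * t) := by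
        rw [sub_eq_add_neg, Real.exp_add]; ring

lemma integral_max_abs_sub_mul_le {X : Ω → ℝ} {s : ℝ≥0} (hX : HasSubgaussianMGF X (s ^ 2) P)
    {κ : ℝ} (hκ : 0 < κ) :
    ∫ ω, max (|X ω| - κ * s) 0 ∂P ≤ 2 * s / κ * Real.exp (-κ ^ 2 / 2) := by
  rcases eq_or_ne s 0 with rfl | hs
  · have hX0 : X =ᵐ[P] 0 :=
      HasSubgaussianMGF.ae_eq_zero_of_hasSubgaussianMGF_zero (by simpa using hX)
    have hexcess : (fun ω => max (|X ω| - κ * (0 : ℝ≥0)) 0) =ᵐ[P] 0 := by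
      filter_upwards [hX0] with ω hω
      simp [hω]
    rw [integral_congr_ae hexcess]
    simp
  have hs' : (0 : ℝ) < s := by positivity
  have hprefactor : 2 / (κ / s) = 2 * s / κ := by field_simp
  have hexponent : (s : ℝ) ^ 2 * (κ / s) ^ 2 / 2 - κ / s * (κ * s) = -κ ^ 2 / 2 := by
    field_simp
    ring
  simpa only [NNReal.coe_pow, hprefactor, hexponent] using
    integral_max_abs_sub_le_exp hX (κ * s) (div_pos hκ hs')

variable {κ : ℝ} {σ : J → ℝ≥0} {Z : J → Ω → ℝ}

lemma integrable_noiseExcess (hZ : ∀ j, HasSubgaussianMGF (Z j) (σ j ^ 2) P) :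
    Integrable (noiseExcess κ σ Z) P :=
  integrable_finsetSum _ fun j _ => integrable_max_abs_sub (hZ j) _

lemma integral_noiseExcess_le (hκ : 0 < κ) (hZ : ∀ j, HasSubgaussianMGF (Z j) (σ j ^ 2) P)
    {Q : ℝ} (hσ : ∀ j, σ j ≤ Q) :
    ∫ ω, noiseExcess κ σ Z ω ∂P ≤ Fintype.card J * (2 * Q / κ * Real.exp (-κ ^ 2 / 2)) := by
  calc ∫ ω, noiseExcess κ σ Z ω ∂P = ∑ j, ∫ ω, max (|Z j ω| - κ * σ j) 0 ∂P :=
        integral_finsetSum _ fun j _ => integrable_max_abs_sub (hZ j) _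
    _ ≤ ∑ _j : J, 2 * Q / κ * Real.exp (-κ ^ 2 / 2) :=
        Finset.sum_le_sum fun j _ => (integral_max_abs_sub_mul_le (hZ j) hκ).trans
          (by gcongr; exact hσ j)
    _ = Fintype.card J * (2 * Q / κ * Real.exp (-κ ^ 2 / 2)) := by simp

end Noise

section Threshold

/-- The paper's `κ = √(2 ln(n² / ε))`, calibrated so that the `n²` noise variables exceed `κ` times
their standard deviation with total Gaussian tail weight `n² exp(-κ² / 2) = ε`. -/
noncomputable def noiseThreshold (n ε : ℝ) : ℝ :=
  √(2 * Real.log (n ^ 2 / ε))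

variable {n ε : ℝ}

lemma log_sq_div (hn : n ≠ 0) (hε : ε ≠ 0) :
    Real.log (n ^ 2 / ε) = 2 * Real.log n + Real.log (1 / ε) := by
  rw [div_eq_mul_one_div, Real.log_mul (by positivity) (by positivity), Real.log_pow]
  norm_num

lemma log_two_le_log_one_div (hε : 0 < ε) (hε' : ε ≤ 1 / 2) : Real.log 2 ≤ Real.log (1 / ε) :=
  Real.log_le_log two_pos ((le_one_div two_pos hε).2 hε')

lemma one_le_noiseThreshold (hn : 1 ≤ n) (hε : 0 < ε) (hε' : ε ≤ 1 / 2) :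
    1 ≤ noiseThreshold n ε := by
  rw [noiseThreshold, Real.one_le_sqrt, log_sq_div (by positivity) hε.ne']
  linarith [Real.log_nonneg hn, log_two_le_log_one_div hε hε', Real.log_two_gt_d9]

lemma sq_mul_exp_neg_noiseThreshold_sq (hn : 1 ≤ n) (hε : 0 < ε) (hε' : ε ≤ 1) :
    n ^ 2 * Real.exp (-noiseThreshold n ε ^ 2 / 2) = ε := by
  have hlog : 0 ≤ Real.log (n ^ 2 / ε) :=
    Real.log_nonneg ((one_le_div hε).2 (hε'.trans (one_le_pow₀ hn)))
  rw [noiseThreshold, Real.sq_sqrt (by positivity), neg_div, mul_div_cancel_left₀ _ two_ne_zero,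
    Real.exp_neg, Real.exp_log (by positivity)]
  field_simp

lemma log_le_logb_two_mul_log_one_div {C : ℝ} (hC : 1 ≤ C) (hε : 0 < ε) (hε' : ε ≤ 1 / 2) :
    Real.log C ≤ Real.logb 2 C * Real.log (1 / ε) :=
  calc Real.log C = Real.logb 2 C * Real.log 2 :=
        (div_mul_cancel₀ _ (Real.log_pos one_lt_two).ne').symm
    _ ≤ Real.logb 2 C * Real.log (1 / ε) :=
        mul_le_mul_of_nonneg_left (log_two_le_log_one_div hε hε') (Real.logb_nonneg one_lt_two hC)

lemma noiseThreshold_le {C : ℝ} {N : ℕ} (hN : 1 ≤ N) (hC : 1 ≤ C) (hn : 1 ≤ n) (hε : 0 < ε)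
    (hε' : ε ≤ 1 / 2) (hcard : n ≤ (C / ε) ^ N) :
    noiseThreshold n ε ≤ √(6 + 4 * Real.logb 2 C) * √(N * Real.log (1 / ε)) := by
  have hN' : (1 : ℝ) ≤ N := by exact_mod_cast hN
  have hl : 0 ≤ Real.log (1 / ε) :=
    (Real.log_nonneg one_le_two).trans (log_two_le_log_one_div hε hε')
  have hlogb := Real.logb_nonneg one_lt_two hC
  have hlog : Real.log n ≤ N * ((1 + Real.logb 2 C) * Real.log (1 / ε)) :=
    calc Real.log n ≤ N * (Real.log C + Real.log (1 / ε)) := by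
          rw [← Real.log_mul (by positivity) (by positivity), mul_one_div, ← Real.log_pow]
          exact Real.log_le_log (by positivity) hcard
      _ ≤ N * ((1 + Real.logb 2 C) * Real.log (1 / ε)) := by
          gcongr
          linarith [log_le_logb_two_mul_log_one_div hC hε hε']
  rw [noiseThreshold, log_sq_div (by positivity) hε.ne', ← Real.sqrt_mul (by positivity)]
  apply Real.sqrt_le_sqrt
  linarith [le_mul_of_one_le_left hl hN']

lemma mul_tail_noiseThreshold_le {m Q : ℝ} (hm : m ≤ n ^ 2) (hn : 1 ≤ n) (hε : 0 < ε)
    (hε' : ε ≤ 1 / 2) (hQ : 0 ≤ Q) :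
    ε * (m * (2 * Q / noiseThreshold n ε * Real.exp (-noiseThreshold n ε ^ 2 / 2))) ≤
      ε * noiseThreshold n ε * Q := by
  have hκ := one_le_noiseThreshold hn hε hε'
  have htail := sq_mul_exp_neg_noiseThreshold_sq hn hε (by linarith)
  set κ := noiseThreshold n ε
  calc ε * (m * (2 * Q / κ * Real.exp (-κ ^ 2 / 2)))
      ≤ ε * (n ^ 2 * (2 * Q / 1 * Real.exp (-κ ^ 2 / 2))) := by gcongr
    _ = 2 * ε * (ε * Q) := by
      linear_combination 2 * ε * Q * htail
    _ ≤ κ * (ε * Q) := by gcongr; linarith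
    _ = ε * κ * Q := by ring

end Threshold

section ExpectedRisk

variable {E J ι Ω : Type*} [SeminormedAddCommGroup E] [NormedSpace ℝ E] [Fintype J]
  {φ : J → StrongDual ℝ E} {σ : J → ℝ≥0} {Z : J → Ω → ℝ} {f : E} {v : ι → E} {A : Set ι}
  {B : Finset ι} {η ε κ Q : ℝ} {sel : Ω → ι}

lemma norm_selection_sub_le_noiseExcess (hφ : ∀ j, ‖φ j‖ ≤ 1)
    (hnet : ∀ a ∈ A, ∃ b ∈ B, ‖v a - v b‖ ≤ η)
    (hnorming : ∀ a ∈ B, ∀ b ∈ B, ‖v a - v b‖ ≠ 0 → ∃ j, φ j (v a - v b) = ‖v a - v b‖)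
    (hε : 0 ≤ ε) (hκ : 0 ≤ κ) (hQ : 0 ≤ Q) (hσ : ∀ j, σ j ≤ Q) (hsel : ∀ ω, sel ω ∈ A)
    (hmin : ∀ ω, ∀ a ∈ A,
      noisyDiscrepancy φ (fun j => ε * Z j ω) (fun j => ε * κ * σ j) (f - v (sel ω)) ≤
        noisyDiscrepancy φ (fun j => ε * Z j ω) (fun j => ε * κ * σ j) (f - v a))
    {a : ι} (ha : a ∈ A) (ω : Ω) :
    ‖v (sel ω) - f‖ ≤
      3 * ‖f - v a‖ + 4 * η + 2 * (ε * κ * Q) + 2 * (ε * noiseExcess κ σ Z ω) := by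
  obtain ⟨b, hb, hab⟩ := hnet a ha
  obtain ⟨c, hc, hsc⟩ := hnet (sel ω) (hsel ω)
  have hnoise (j : J) : |ε * Z j ω| ≤ ε * κ * σ j + ε * noiseExcess κ σ Z ω := by
    rw [abs_mul, abs_of_nonneg hε, mul_assoc, ← mul_add]
    gcongr
    exact abs_le_add_noiseExcess κ σ Z ω j
  exact norm_sub_le_of_noisyDiscrepancy_le hφ (mul_nonneg hε (noiseExcess_nonneg κ σ Z ω)) hnoise
    (by positivity) (fun j => by gcongr; exact hσ j) (hmin ω a ha) hab hsc (hnorming c hc b hb)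

variable [MeasurableSpace Ω] {P : Measure Ω} [IsProbabilityMeasure P]

theorem integral_norm_selection_sub_le (hφ : ∀ j, ‖φ j‖ ≤ 1)
    (hnet : ∀ a ∈ A, ∃ b ∈ B, ‖v a - v b‖ ≤ η)
    (hnorming : ∀ a ∈ B, ∀ b ∈ B, ‖v a - v b‖ ≠ 0 → ∃ j, φ j (v a - v b) = ‖v a - v b‖)
    (hε : 0 ≤ ε) (hκ : 0 < κ) (hQ : 0 ≤ Q) (hσ : ∀ j, σ j ≤ Q)
    (hZ : ∀ j, HasSubgaussianMGF (Z j) (σ j ^ 2) P) (hsel : ∀ ω, sel ω ∈ A)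
    (hmin : ∀ ω, ∀ a ∈ A,
      noisyDiscrepancy φ (fun j => ε * Z j ω) (fun j => ε * κ * σ j) (f - v (sel ω)) ≤
        noisyDiscrepancy φ (fun j => ε * Z j ω) (fun j => ε * κ * σ j) (f - v a))
    (hmeas : AEStronglyMeasurable (fun ω => ‖v (sel ω) - f‖) P) :
    Integrable (fun ω => ‖v (sel ω) - f‖) P ∧
      ∫ ω, ‖v (sel ω) - f‖ ∂P ≤ 3 * (⨅ a : A, ‖f - v a‖) + 4 * η + 2 * (ε * κ * Q) +
        2 * (ε * (Fintype.card J * (2 * Q / κ * Real.exp (-κ ^ 2 / 2)))) := by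
  have hpointwise {a : ι} (ha : a ∈ A) :=
    norm_selection_sub_le_noiseExcess (Z := Z) hφ hnet hnorming hε hκ.le hQ hσ hsel hmin ha
  have hRint : Integrable (fun ω => 2 * (ε * noiseExcess κ σ Z ω)) P :=
    ((integrable_noiseExcess hZ).const_mul ε).const_mul 2
  have : Nonempty A := (nonempty_of_isProbabilityMeasure P).map fun ω => ⟨sel ω, hsel ω⟩
  have hint : Integrable (fun ω => ‖v (sel ω) - f‖) P := by
    obtain ⟨a, ha⟩ := ‹Nonempty A›
    refine ((integrable_const (3 * ‖f - v a‖ + 4 * η + 2 * (ε * κ * Q))).add hRint).mono' hmeas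
      (.of_forall fun ω => ?_)
    simpa only [norm_norm, Pi.add_apply] using hpointwise ha ω
  refine ⟨hint, ?_⟩
  have hrisk (a : A) : ∫ ω, ‖v (sel ω) - f‖ ∂P ≤ 3 * ‖f - v a‖ + 4 * η + 2 * (ε * κ * Q) +
      2 * (ε * ∫ ω, noiseExcess κ σ Z ω ∂P) := by
    refine (integral_mono hint ((integrable_const _).add hRint) (hpointwise a.2)).trans_eq ?_
    simp only [Pi.add_apply]
    rw [integral_add (integrable_const _) hRint, integral_const, probReal_univ, one_smul,
      integral_const_mul, integral_const_mul]
  have hexcess := mul_le_mul_of_nonneg_left (integral_noiseExcess_le hκ hZ hσ) hε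
  have hinf : (∫ ω, ‖v (sel ω) - f‖ ∂P - (4 * η + 2 * (ε * κ * Q) +
      2 * (ε * ∫ ω, noiseExcess κ σ Z ω ∂P))) / 3 ≤ ⨅ a : A, ‖f - v a‖ :=
    le_ciInf fun a => by linarith [hrisk a]
  linarith

theorem integral_norm_selection_sub_le_of_card_le {C n : ℝ} {N : ℕ} (hφ : ∀ j, ‖φ j‖ ≤ 1)
    (hnet : ∀ a ∈ A, ∃ b ∈ B, ‖v a - v b‖ ≤ η)
    (hnorming : ∀ a ∈ B, ∀ b ∈ B, ‖v a - v b‖ ≠ 0 → ∃ j, φ j (v a - v b) = ‖v a - v b‖)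
    (hε : 0 < ε) (hε' : ε ≤ 1 / 2) (hN : 1 ≤ N) (hC : 1 ≤ C) (hn : 1 ≤ n) (hnC : n ≤ (C / ε) ^ N)
    (hJ : Fintype.card J ≤ n ^ 2) (hκ : κ = noiseThreshold n ε) (hQ : 0 ≤ Q) (hσ : ∀ j, σ j ≤ Q)
    (hZ : ∀ j, HasSubgaussianMGF (Z j) (σ j ^ 2) P) (hsel : ∀ ω, sel ω ∈ A)
    (hmin : ∀ ω, ∀ a ∈ A,
      noisyDiscrepancy φ (fun j => ε * Z j ω) (fun j => ε * κ * σ j) (f - v (sel ω)) ≤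
        noisyDiscrepancy φ (fun j => ε * Z j ω) (fun j => ε * κ * σ j) (f - v a))
    (hmeas : AEStronglyMeasurable (fun ω => ‖v (sel ω) - f‖) P) :
    Integrable (fun ω => ‖v (sel ω) - f‖) P ∧
      ∫ ω, ‖v (sel ω) - f‖ ∂P ≤ 3 * (⨅ a : A, ‖f - v a‖) +
        4 * √(6 + 4 * Real.logb 2 C) * Q * ε * √(N * Real.log (1 / ε)) +
        4 * η := by
  have hκ0 : 0 < κ := hκ ▸ one_pos.trans_le (one_le_noiseThreshold hn hε hε')
  obtain ⟨hint, hrisk⟩ :=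
    integral_norm_selection_sub_le hφ hnet hnorming hε.le hκ0 hQ hσ hZ hsel hmin hmeas
  refine ⟨hint, ?_⟩
  have htail := hκ ▸ mul_tail_noiseThreshold_le hJ hn hε hε' hQ
  have hκQ : ε * κ * Q ≤
      ε * (√(6 + 4 * Real.logb 2 C) * √(N * Real.log (1 / ε))) * Q := by
    gcongr
    exact hκ ▸ noiseThreshold_le hN hC hn hε hε' hnC
  linarith

end ExpectedRisk

section DualProbe

variable {α : Type*} [MeasurableSpace α] {p q : ℝ≥0∞} {μ : Measure α} {g : α → ℝ}

/-- The probe `ψ_g = |g|^{p-1} sign(g) / ‖g‖_p^{p-1}` dual to `g` in `L^p(μ)`. -/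
noncomputable def dualProbe (p : ℝ≥0∞) (μ : Measure α) (g : α → ℝ) (t : α) : ℝ :=
  |g t| ^ (p.toReal - 1) * Real.sign (g t) / (eLpNorm g p μ).toReal ^ (p.toReal - 1)

lemma measurable_realSign : Measurable Real.sign := by
  unfold Real.sign
  exact .ite measurableSet_Iio measurable_const
    (.ite measurableSet_Ioi measurable_const measurable_const)

lemma abs_realSign_le_one (x : ℝ) : |Real.sign x| ≤ 1 := by
  rcases Real.sign_apply_eq x with h | h | h <;> simp [h]

lemma abs_rpow_mul_realSign_mul_self {r : ℝ} (hr : r ≠ 0) (x : ℝ) :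
    |x| ^ (r - 1) * Real.sign x * x = |x| ^ r := by
  have hsign : Real.sign x * x = |x| := by
    rcases lt_trichotomy x 0 with hx | rfl | hx
    · rw [Real.sign_of_neg hx, abs_of_neg hx, neg_one_mul]
    · simp
    · rw [Real.sign_of_pos hx, abs_of_pos hx, one_mul]
  rw [mul_assoc, hsign, ← Real.rpow_add_one' (abs_nonneg x) (by simpa), sub_add_cancel]

lemma aestronglyMeasurable_dualProbe (hg : AEStronglyMeasurable g μ) :
    AEStronglyMeasurable (dualProbe p μ g) μ := by
  have hm : Measurable fun x : ℝ => |x| ^ (p.toReal - 1) * Real.sign x /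
      (eLpNorm g p μ).toReal ^ (p.toReal - 1) :=
    ((measurable_norm.pow_const _).mul measurable_realSign).div_const _
  exact (hm.comp_aemeasurable hg.aemeasurable).aestronglyMeasurable

lemma one_le_toReal (hp : 1 ≤ p) (hp' : p ≠ ⊤) : 1 ≤ p.toReal := by
  simpa using ENNReal.toReal_mono hp' hp

lemma integral_dualProbe_mul (hp : 1 ≤ p) (hp' : p ≠ ⊤) (hg : MemLp g p μ)
    (hg0 : (eLpNorm g p μ).toReal ≠ 0) :
    ∫ t, dualProbe p μ g t * g t ∂μ = (eLpNorm g p μ).toReal := by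
  set n := (eLpNorm g p μ).toReal with hn
  have hr : p.toReal ≠ 0 := by have := one_le_toReal hp hp'; positivity
  have hn0 : 0 < n := by positivity
  have hpoint (t : α) : dualProbe p μ g t * g t = ‖g t‖ ^ p.toReal / n ^ (p.toReal - 1) := by
    rw [dualProbe, div_mul_eq_mul_div, abs_rpow_mul_realSign_mul_self hr, Real.norm_eq_abs]
  have hint : ∫ t, ‖g t‖ ^ p.toReal ∂μ = n ^ p.toReal := by
    have hnonneg : 0 ≤ ∫ t, ‖g t‖ ^ p.toReal ∂μ := integral_nonneg fun t => by positivity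
    rw [hn, hg.eLpNorm_eq_integral_rpow_norm (one_pos.trans_le hp).ne' hp',
      ENNReal.toReal_ofReal (by positivity), Real.rpow_inv_rpow hnonneg hr]
  simp_rw [hpoint]
  rw [integral_div, hint, ← Real.rpow_sub hn0, sub_sub_cancel, Real.rpow_one]

lemma eLpNorm_dualProbe (hp : 1 < p) (hp' : p ≠ ⊤) (hg : (eLpNorm g p μ).toReal ≠ 0) (s : ℝ≥0∞) :
    eLpNorm (dualProbe p μ g) s μ =
      (eLpNorm g (s * (p - 1)) μ / eLpNorm g p μ) ^ (p.toReal - 1) := by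
  have hr : 0 < p.toReal - 1 := by
    simpa using (ENNReal.toReal_lt_toReal ENNReal.one_ne_top hp').2 hp
  have hr' : ENNReal.ofReal (p.toReal - 1) = p - 1 := by
    rw [ENNReal.ofReal_sub _ zero_le_one, ENNReal.ofReal_toReal hp', ENNReal.ofReal_one]
  have hgtop := (ENNReal.toReal_ne_zero.1 hg).2
  have hn : 0 < (eLpNorm g p μ).toReal := by positivity
  have hnorm (t : α) : ‖dualProbe p μ g t‖ =
      ‖(((eLpNorm g p μ).toReal ^ (p.toReal - 1))⁻¹ • fun t => ‖g t‖ ^ (p.toReal - 1)) t‖ := by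
    rcases eq_or_ne (g t) 0 with ht | ht
    · simp [dualProbe, ht, Real.zero_rpow hr.ne']
    · rcases Real.sign_apply_eq_of_ne_zero _ ht with h | h <;>
        simp [dualProbe, h, div_eq_inv_mul]
  rw [eLpNorm_congr_norm_ae (.of_forall hnorm), eLpNorm_const_smul, eLpNorm_norm_rpow g hr, hr',
    ENNReal.div_rpow_of_nonneg _ _ hr.le, ENNReal.div_eq_inv_mul, enorm_inv (by positivity),
    Real.enorm_of_nonneg (by positivity), ← ENNReal.ofReal_rpow_of_pos hn,
    ENNReal.ofReal_toReal hgtop]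

lemma holderConjugate_mul_sub_one [q.HolderConjugate p] (hp : 1 < p) (hp' : p ≠ ⊤) :
    q * (p - 1) = p := by
  have hpq : p.HolderConjugate q := .symm
  have hq : q ≠ ⊤ := (ENNReal.HolderConjugate.ne_top_iff_ne_one q p).2 hp.ne'
  calc q * (p - 1) = q * ((p - 1) * p⁻¹) * p := by
        rw [mul_assoc, mul_assoc, ENNReal.inv_mul_cancel (one_pos.trans hp).ne' hp', mul_one]
    _ = p := by
        rw [ENNReal.HolderConjugate.sub_one_mul_inv p q hp',
          ENNReal.mul_inv_cancel (ENNReal.HolderConjugate.ne_zero q p) hq, one_mul]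

lemma eLpNorm_dualProbe_conjugate_le_one [q.HolderConjugate p] (hp : p ≠ ⊤)
    (hg : (eLpNorm g p μ).toReal ≠ 0) : eLpNorm (dualProbe p μ g) q μ ≤ 1 := by
  rcases (ENNReal.HolderConjugate.one_le p q).eq_or_lt with rfl | hp1
  · obtain rfl : q = ⊤ := (ENNReal.HolderConjugate.eq_top_iff_eq_one q 1).2 rfl
    have hbound : ∀ t, ‖dualProbe 1 μ g t‖ ≤ 1 := fun t => by
      simpa [dualProbe] using abs_realSign_le_one (g t)
    simpa using eLpNorm_le_of_ae_bound (p := ⊤) (.of_forall hbound)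
  · obtain ⟨hg0, hgtop⟩ := ENNReal.toReal_ne_zero.1 hg
    rw [eLpNorm_dualProbe hp1 hp hg, holderConjugate_mul_sub_one hp1 hp, ENNReal.div_self hg0 hgtop,
      ENNReal.one_rpow]

lemma memLp_dualProbe_conjugate [q.HolderConjugate p] (hp : p ≠ ⊤) (hg : MemLp g p μ)
    (hg0 : (eLpNorm g p μ).toReal ≠ 0) : MemLp (dualProbe p μ g) q μ :=
  ⟨aestronglyMeasurable_dualProbe hg.1,
    (eLpNorm_dualProbe_conjugate_le_one hp hg0).trans_lt ENNReal.one_lt_top⟩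

lemma two_le_of_holderConjugate_of_le_two [q.HolderConjugate p] (hp : p ≤ 2) : 2 ≤ q := by
  by_contra! hq
  have hlt : (2 : ℝ≥0∞)⁻¹ + 2⁻¹ < q⁻¹ + p⁻¹ :=
    ENNReal.add_lt_add_of_lt_of_le (by simp) (ENNReal.inv_lt_inv.2 hq) (ENNReal.inv_le_inv.2 hp)
  rw [ENNReal.HolderConjugate.inv_add_inv_eq_one q p, ENNReal.inv_two_add_inv_two] at hlt
  exact hlt.false

lemma eLpNorm_two_dualProbe_le_one [IsProbabilityMeasure μ] (hp : 1 ≤ p) (hp2 : p ≤ 2)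
    (hg : AEStronglyMeasurable g μ) (hg0 : (eLpNorm g p μ).toReal ≠ 0) :
    eLpNorm (dualProbe p μ g) 2 μ ≤ 1 := by
  have hconj : ENNReal.HolderConjugate (1 - p⁻¹)⁻¹ p :=
    (ENNReal.HolderConjugate.inv_one_sub_inv' hp).symm
  have hq : 2 ≤ (1 - p⁻¹)⁻¹ := two_le_of_holderConjugate_of_le_two hp2
  exact (eLpNorm_le_eLpNorm_of_exponent_le hq (aestronglyMeasurable_dualProbe hg)).trans
    (eLpNorm_dualProbe_conjugate_le_one (ne_top_of_le_ne_top ENNReal.ofNat_ne_top hp2) hg0)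

/-- The constant `Q₁(p)` of the paper, which bounds the `L²` norms of the probes dual to a family
`g`: it is `1` for `p ≤ 2` and `sup_j (‖g_j‖_{2p-2} / ‖g_j‖_p)^{p-1}` for `p > 2`. -/
noncomputable def probeNormBound {J : Type*} (p : ℝ≥0∞) (μ : Measure α) (g : J → α → ℝ) : ℝ :=
  if p ≤ 2 then 1 else
    ⨆ j, ((eLpNorm (g j) (2 * p - 2) μ).toReal / (eLpNorm (g j) p μ).toReal) ^ (p.toReal - 1)

lemma probeNormBound_nonneg {J : Type*} (p : ℝ≥0∞) (μ : Measure α) (g : J → α → ℝ) :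
    0 ≤ probeNormBound p μ g := by
  unfold probeNormBound
  split_ifs
  · exact zero_le_one
  · exact Real.iSup_nonneg fun j => by positivity

lemma eLpNorm_two_dualProbe_le_probeNormBound {J : Type*} [Finite J] [IsProbabilityMeasure μ]
    (hp : 1 ≤ p) (hp' : p ≠ ⊤) {g : J → α → ℝ} (hg : ∀ j, AEStronglyMeasurable (g j) μ)
    (hg0 : ∀ j, (eLpNorm (g j) p μ).toReal ≠ 0)
    (hfin : ∀ j, eLpNorm (g j) (2 * p - 2) μ ≠ ⊤) (j : J) :
    eLpNorm (dualProbe p μ (g j)) 2 μ ≤ ENNReal.ofReal (probeNormBound p μ g) := by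
  rw [probeNormBound]
  split_ifs with hp2
  · simpa using eLpNorm_two_dualProbe_le_one hp hp2 (hg j) (hg0 j)
  have hp2 : 2 < p := not_le.1 hp2
  have hr : 0 ≤ p.toReal - 1 := sub_nonneg.2 (one_le_toReal hp hp')
  rw [eLpNorm_dualProbe (ENNReal.one_lt_two.trans hp2) hp' (hg0 j), ENNReal.mul_sub (by simp),
    mul_one, ENNReal.le_ofReal_iff_toReal_le, ← ENNReal.toReal_rpow, ENNReal.toReal_div]
  · exact le_ciSup (f := fun j => ((eLpNorm (g j) (2 * p - 2) μ).toReal /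
      (eLpNorm (g j) p μ).toReal) ^ (p.toReal - 1)) (Set.finite_range _).bddAbove j
  · exact ENNReal.rpow_ne_top_of_nonneg hr
      (ENNReal.div_ne_top (hfin j) (ENNReal.toReal_ne_zero.1 (hg0 j)).1)
  · exact Real.iSup_nonneg fun j => by positivity

end DualProbe

section ProbeFunctional

variable {α : Type*} [MeasurableSpace α] {μ : Measure α} {p q : ℝ≥0∞} [q.HolderConjugate p]
  {ψ : α → ℝ}

lemma abs_integral_mul_le {g : α → ℝ} (hψ : MemLp ψ q μ) (hg : MemLp g p μ) :
    |∫ t, ψ t * g t ∂μ| ≤ (eLpNorm ψ q μ).toReal * (eLpNorm g p μ).toReal := by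
  have hholder : ‖∫ t, ψ t * g t ∂μ‖ₑ ≤ eLpNorm ψ q μ * eLpNorm g p μ :=
    calc ‖∫ t, ψ t * g t ∂μ‖ₑ ≤ eLpNorm (ψ • g) 1 μ := by
          simpa [eLpNorm_one_eq_lintegral_enorm] using
            enorm_integral_le_lintegral_enorm fun t => ψ t * g t
      _ ≤ eLpNorm ψ q μ * eLpNorm g p μ := eLpNorm_smul_le_mul_eLpNorm hg.1 hψ.1
  simpa using ENNReal.toReal_mono (ENNReal.mul_ne_top hψ.2.ne hg.2.ne) hholder

variable [Fact (1 ≤ p)] [Fact (1 ≤ q)]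

/-- Integration against `ψ`, as a functional on `L^p(μ)`. -/
noncomputable def probeFunctional (p : ℝ≥0∞) [q.HolderConjugate p] [Fact (1 ≤ p)]
    (hψ : MemLp ψ q μ) : StrongDual ℝ (Lp ℝ p μ) :=
  (ContinuousLinearMap.mul ℝ ℝ).lpPairing μ q p (hψ.toLp ψ)

lemma probeFunctional_apply (hψ : MemLp ψ q μ) (x : Lp ℝ p μ) :
    probeFunctional p hψ x = ∫ t, ψ t * x t ∂μ := by
  rw [probeFunctional, ContinuousLinearMap.lpPairing_eq_integral]
  refine integral_congr_ae ?_
  filter_upwards [hψ.coeFn_toLp] with t ht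
  simp [ht]

lemma probeFunctional_toLp (hψ : MemLp ψ q μ) {g : α → ℝ} (hg : MemLp g p μ) :
    probeFunctional p hψ (hg.toLp g) = ∫ t, ψ t * g t ∂μ := by
  rw [probeFunctional_apply]
  refine integral_congr_ae ?_
  filter_upwards [hg.coeFn_toLp] with t ht
  rw [ht]

lemma norm_probeFunctional_le (hψ : MemLp ψ q μ) :
    ‖probeFunctional p hψ‖ ≤ (eLpNorm ψ q μ).toReal := by
  refine ContinuousLinearMap.opNorm_le_bound _ ENNReal.toReal_nonneg fun x => ?_
  rw [probeFunctional_apply, Real.norm_eq_abs, Lp.norm_def]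
  exact abs_integral_mul_le hψ (Lp.memLp x)

end ProbeFunctional

section ProbeSelection

variable {α ι : Type*} [MeasurableSpace α] {μ : Measure α} {p q : ℝ≥0∞}

lemma toReal_eLpNorm_dualProbe_conjugate [q.HolderConjugate p] (hp : p ≠ ⊤) {g : α → ℝ}
    (hg : MemLp g p μ) (hg0 : (eLpNorm g p μ).toReal ≠ 0) :
    (eLpNorm (dualProbe p μ g) q μ).toReal = 1 := by
  refine le_antisymm (ENNReal.toReal_le_of_le_ofReal zero_le_one ?_) ?_
  · simpa using eLpNorm_dualProbe_conjugate_le_one hp hg0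
  have hholder := abs_integral_mul_le (memLp_dualProbe_conjugate (q := q) hp hg hg0) hg
  rw [integral_dualProbe_mul (ENNReal.HolderConjugate.one_le p q) hp hg hg0,
    abs_of_nonneg ENNReal.toReal_nonneg] at hholder
  exact (le_mul_iff_one_le_left (by positivity)).1 hholder

/-- The selection criterion of the paper at the residual `g`, for probes `ψ`, noise `z` and
thresholds `τ`. -/
noncomputable def probeCriterion {J : Type*} (q : ℝ≥0∞) (μ : Measure α) (ψ : J → α → ℝ)
    (z τ : J → ℝ) (g : α → ℝ) : ℝ :=
  ⨆ j, (|(∫ t, ψ j t * g t ∂μ) + z j| - τ j) / (eLpNorm (ψ j) q μ).toReal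

lemma probeCriterion_eq_noisyDiscrepancy {J : Type*} [q.HolderConjugate p] [Fact (1 ≤ p)]
    [Fact (1 ≤ q)] {ψ : J → α → ℝ} (hψ : ∀ j, MemLp (ψ j) q μ)
    (hψ1 : ∀ j, (eLpNorm (ψ j) q μ).toReal = 1) (z τ : J → ℝ) {g : α → ℝ} (hg : MemLp g p μ) :
    probeCriterion q μ ψ z τ g =
      noisyDiscrepancy (fun j => probeFunctional p (hψ j)) z τ (hg.toLp g) := by
  simp only [probeCriterion, noisyDiscrepancy, probeFunctional_toLp, hψ1, div_one]

/-- The ordered pairs of indices in `S` whose members of the family `G` differ in `L^p(μ)`. They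
index the paper's `G_{Λ_ε}` (with repetitions), hence the probes. -/
abbrev DistinctPair (p : ℝ≥0∞) (μ : Measure α) (G : ι → α → ℝ) (S : Finset ι) : Type _ :=
  {pr : ι × ι //
    pr.1 ∈ S ∧ pr.2 ∈ S ∧ (eLpNorm (fun t => G pr.1 t - G pr.2 t) p μ).toReal ≠ 0}

namespace DistinctPair

variable {G : ι → α → ℝ} {S : Finset ι}

/-- The difference of the two members of the family `G` that the pair `j` selects. -/
def diff (j : DistinctPair p μ G S) (t : α) : ℝ :=
  G j.1.1 t - G j.1.2 t

lemma toProduct_injective : Function.Injective fun j : DistinctPair p μ G S =>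
    (⟨j.1, Finset.mem_product.2 ⟨j.2.1, j.2.2.1⟩⟩ : (S ×ˢ S : Finset (ι × ι))) :=
  fun _ _ h => Subtype.ext (congrArg (fun pr => pr.1) h)

instance : Finite (DistinctPair p μ G S) :=
  .of_injective _ toProduct_injective

lemma natCard_le : Nat.card (DistinctPair p μ G S) ≤ S.card ^ 2 := by
  calc Nat.card (DistinctPair p μ G S) ≤ Nat.card (S ×ˢ S : Finset (ι × ι)) :=
        Nat.card_le_card_of_injective _ toProduct_injective
    _ = S.card ^ 2 := by rw [Nat.card_eq_fintype_card, Fintype.card_coe, Finset.card_product, sq]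

end DistinctPair

lemma norm_toLp_sub_toLp {f g : α → ℝ} (hf : MemLp f p μ) (hg : MemLp g p μ) :
    ‖hf.toLp f - hg.toLp g‖ = (eLpNorm (fun t => f t - g t) p μ).toReal := by
  rw [← MemLp.toLp_sub, Lp.norm_toLp]
  rfl

lemma toReal_eLpNorm_sum_mul_sub_sum_mul_le [Fintype ι] (hp : 1 ≤ p) {F : ι → α → ℝ}
    (hF : ∀ i, AEStronglyMeasurable (F i) μ) {L : ℝ} (hL : 0 ≤ L)
    (hFL : ∀ i, eLpNorm (F i) p μ ≤ ENNReal.ofReal L) {w v : ι → ℝ} {δ : ℝ}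
    (hδ : ∑ i, |w i - v i| ≤ δ) :
    (eLpNorm (fun t => ∑ i, w i * F i t - ∑ i, v i * F i t) p μ).toReal ≤ L * δ := by
  have hδ0 : 0 ≤ δ := (Finset.sum_nonneg fun _ _ => abs_nonneg _).trans hδ
  have hsum : (fun t => ∑ i, w i * F i t - ∑ i, v i * F i t) = ∑ i, (w i - v i) • F i := by
    ext
    simp [sub_mul]
  refine ENNReal.toReal_le_of_le_ofReal (by positivity) ?_
  calc eLpNorm (fun t => ∑ i, w i * F i t - ∑ i, v i * F i t) p μ
      ≤ ∑ i, eLpNorm ((w i - v i) • F i) p μ :=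
        hsum ▸ eLpNorm_sum_le (fun i _ => (hF i).const_smul _) hp
    _ ≤ ∑ i, ENNReal.ofReal (L * |w i - v i|) := by
        gcongr with i
        rw [eLpNorm_const_smul, mul_comm, ENNReal.ofReal_mul hL, Real.enorm_eq_ofReal_abs]
        gcongr
        exact hFL i
    _ = ENNReal.ofReal (L * ∑ i, |w i - v i|) := by
        rw [Finset.mul_sum, ENNReal.ofReal_sum_of_nonneg fun i _ => by positivity]
    _ ≤ ENNReal.ofReal (L * δ) := by gcongr

lemma exists_probeFunctional_apply_eq_norm [q.HolderConjugate p] [Fact (1 ≤ p)] [Fact (1 ≤ q)]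
    (hp : p ≠ ⊤) {G : ι → α → ℝ} {S : Finset ι} (hG : ∀ a, MemLp (G a) p μ)
    (hψ : ∀ j : DistinctPair p μ G S, MemLp (dualProbe p μ j.diff) q μ) {a b : ι} (ha : a ∈ S)
    (hb : b ∈ S) (hab : ‖(hG a).toLp (G a) - (hG b).toLp (G b)‖ ≠ 0) :
    ∃ j, probeFunctional p (hψ j) ((hG a).toLp (G a) - (hG b).toLp (G b)) =
      ‖(hG a).toLp (G a) - (hG b).toLp (G b)‖ := by
  rw [norm_toLp_sub_toLp] at hab ⊢
  refine ⟨⟨(a, b), ha, hb, hab⟩, ?_⟩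
  rw [← MemLp.toLp_sub, probeFunctional_toLp]
  exact integral_dualProbe_mul (ENNReal.HolderConjugate.one_le p q) hp ((hG a).sub (hG b)) hab

theorem integral_eLpNorm_selection_sub_le {Ω : Type*} [MeasurableSpace Ω] {P : Measure Ω}
    [IsProbabilityMeasure P] [q.HolderConjugate p] (hp : p ≠ ⊤) {f : α → ℝ} (hf : MemLp f p μ)
    {G : ι → α → ℝ} (hG : ∀ a, MemLp (G a) p μ) {A : Set ι} {B : Finset ι} {η : ℝ}
    (hnet : ∀ a ∈ A, ∃ b ∈ B, (eLpNorm (fun t => G a t - G b t) p μ).toReal ≤ η)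
    {ε C : ℝ} {N : ℕ} (hε : 0 < ε) (hε' : ε ≤ 1 / 2) (hN : 1 ≤ N) (hC : 1 ≤ C)
    (hcard : (B.card : ℝ) ≤ (C / ε) ^ N) {ψ : DistinctPair p μ G B → α → ℝ}
    (hψ : ∀ j, ψ j = dualProbe p μ j.diff) {Q : ℝ} (hQ : 0 ≤ Q)
    (hψQ : ∀ j, eLpNorm (ψ j) 2 μ ≤ ENNReal.ofReal Q) {Z : DistinctPair p μ G B → Ω → ℝ}
    (hZ : ∀ j, HasSubgaussianMGF (Z j) ((eLpNorm (ψ j) 2 μ).toNNReal ^ 2) P) {κ : ℝ}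
    (hκ : κ = noiseThreshold B.card ε) {sel : Ω → ι} (hsel : ∀ ω, sel ω ∈ A)
    (hmin : ∀ ω, ∀ a ∈ A,
      probeCriterion q μ ψ (fun j => ε * Z j ω) (fun j => ε * κ * (eLpNorm (ψ j) 2 μ).toReal)
          (fun t => f t - G (sel ω) t) ≤
        probeCriterion q μ ψ (fun j => ε * Z j ω) (fun j => ε * κ * (eLpNorm (ψ j) 2 μ).toReal)
          (fun t => f t - G a t))
    (hmeas : AEStronglyMeasurable
      (fun ω => (eLpNorm (fun t => G (sel ω) t - f t) p μ).toReal) P) :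
    Integrable (fun ω => (eLpNorm (fun t => G (sel ω) t - f t) p μ).toReal) P ∧
      ∫ ω, (eLpNorm (fun t => G (sel ω) t - f t) p μ).toReal ∂P ≤
        3 * (⨅ a : A, (eLpNorm (fun t => f t - G a t) p μ).toReal) +
          4 * √(6 + 4 * Real.logb 2 C) * Q * ε * √(N * Real.log (1 / ε)) +
          4 * η := by
  have hp1 : 1 ≤ p := ENNReal.HolderConjugate.one_le p q
  have : Fact (1 ≤ p) := ⟨hp1⟩
  have : Fact (1 ≤ q) := ⟨ENNReal.HolderConjugate.one_le q p⟩
  have := Fintype.ofFinite (DistinctPair p μ G B)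
  obtain rfl : ψ = fun j => dualProbe p μ j.diff := funext hψ
  have hdiff (j : DistinctPair p μ G B) : MemLp j.diff p μ := (hG _).sub (hG _)
  have hψq (j : DistinctPair p μ G B) : MemLp (dualProbe p μ j.diff) q μ :=
    memLp_dualProbe_conjugate hp (hdiff j) j.2.2.2
  have hψ1 (j : DistinctPair p μ G B) : (eLpNorm (dualProbe p μ j.diff) q μ).toReal = 1 :=
    toReal_eLpNorm_dualProbe_conjugate hp (hdiff j) j.2.2.2
  have hB : 1 ≤ (B.card : ℝ) := by
    obtain ⟨ω⟩ := nonempty_of_isProbabilityMeasure P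
    obtain ⟨b, hb, -⟩ := hnet _ (hsel ω)
    exact_mod_cast Finset.card_pos.2 ⟨b, hb⟩
  have hJ : (Fintype.card (DistinctPair p μ G B) : ℝ) ≤ (B.card : ℝ) ^ 2 := by
    rw [← Nat.card_eq_fintype_card]
    exact_mod_cast DistinctPair.natCard_le
  have hcriterion (ω : Ω) (a : ι) := probeCriterion_eq_noisyDiscrepancy hψq hψ1
    (fun j => ε * Z j ω) (fun j => ε * κ * (eLpNorm (dualProbe p μ j.diff) 2 μ).toReal)
    (hf.sub (hG a))
  simp only [← norm_toLp_sub_toLp (hG _) hf, ← norm_toLp_sub_toLp hf (hG _)] at hmeas ⊢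
  exact integral_norm_selection_sub_le_of_card_le (f := hf.toLp f)
    (v := fun a => (hG a).toLp (G a))
    (σ := fun j : DistinctPair p μ G B => (eLpNorm (dualProbe p μ j.diff) 2 μ).toNNReal)
    (fun j => (norm_probeFunctional_le (hψq j)).trans_eq (hψ1 j))
    (fun a ha => by simpa only [norm_toLp_sub_toLp] using hnet a ha)
    (fun a ha b hb => exists_probeFunctional_apply_eq_norm hp hG hψq ha hb)
    hε hε' hN hC hB hcard hJ hκ hQ (fun j => ENNReal.toReal_le_of_le_ofReal hQ (hψQ j)) hZ hsel
    (fun ω a ha => ((hcriterion ω (sel ω)).symm.trans_le (hmin ω a ha)).trans_eq (hcriterion ω a))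
    hmeas

theorem stmt_13_general [Fintype ι] [IsProbabilityMeasure μ] {Ω : Type*} [MeasurableSpace Ω]
    {P : Measure Ω} [IsProbabilityMeasure P] [q.HolderConjugate p] (hp : p ≠ ⊤) {f : α → ℝ}
    (hf : MemLp f p μ) {F : ι → α → ℝ} (hF : ∀ i, AEStronglyMeasurable (F i) μ) {L : ℝ}
    (hL : 0 ≤ L) (hFL : ∀ i, eLpNorm (F i) p μ ≤ ENNReal.ofReal L) {G : (ι → ℝ) → α → ℝ}
    (hG : ∀ w t, G w t = ∑ i, w i * F i t) {A : Set (ι → ℝ)} {B : Finset (ι → ℝ)} {δ : ℝ}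
    (hnet : ∀ w ∈ A, ∃ v ∈ B, ∑ i, |w i - v i| ≤ δ)
    {ε C : ℝ} {N : ℕ} (hε : 0 < ε) (hε' : ε ≤ 1 / 2) (hN : 1 ≤ N) (hC : 1 ≤ C)
    (hcard : (B.card : ℝ) ≤ (C / ε) ^ N)
    (hfin : ∀ j : DistinctPair p μ G B, eLpNorm j.diff (2 * p - 2) μ ≠ ⊤)
    {ψ : DistinctPair p μ G B → α → ℝ} (hψ : ∀ j, ψ j = dualProbe p μ j.diff)
    {Z : DistinctPair p μ G B → Ω → ℝ}
    (hZ : ∀ j, HasSubgaussianMGF (Z j) ((eLpNorm (ψ j) 2 μ).toNNReal ^ 2) P) {κ : ℝ}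
    (hκ : κ = noiseThreshold B.card ε) {sel : Ω → ι → ℝ} (hsel : ∀ ω, sel ω ∈ A)
    (hmin : ∀ ω, ∀ w ∈ A,
      probeCriterion q μ ψ (fun j => ε * Z j ω) (fun j => ε * κ * (eLpNorm (ψ j) 2 μ).toReal)
          (fun t => f t - G (sel ω) t) ≤
        probeCriterion q μ ψ (fun j => ε * Z j ω) (fun j => ε * κ * (eLpNorm (ψ j) 2 μ).toReal)
          (fun t => f t - G w t))
    (hmeas : AEStronglyMeasurable
      (fun ω => (eLpNorm (fun t => G (sel ω) t - f t) p μ).toReal) P) :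
    Integrable (fun ω => (eLpNorm (fun t => G (sel ω) t - f t) p μ).toReal) P ∧
      ∫ ω, (eLpNorm (fun t => G (sel ω) t - f t) p μ).toReal ∂P ≤
        3 * (⨅ w : A, (eLpNorm (fun t => f t - G w t) p μ).toReal) +
          4 * √(6 + 4 * Real.logb 2 C) *
            probeNormBound p μ (fun j : DistinctPair p μ G B => j.diff) * ε *
              √(N * Real.log (1 / ε)) +
          4 * (L * δ) := by
  have hp1 : 1 ≤ p := ENNReal.HolderConjugate.one_le p q
  have hFp (i : ι) : MemLp (F i) p μ := ⟨hF i, (hFL i).trans_lt ENNReal.ofReal_lt_top⟩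
  have hGp (w : ι → ℝ) : MemLp (G w) p μ := by
    simpa only [← hG] using memLp_finsetSum Finset.univ fun i _ => (hFp i).const_mul (w i)
  have hnetp : ∀ w ∈ A, ∃ v ∈ B, (eLpNorm (fun t => G w t - G v t) p μ).toReal ≤ L * δ := by
    intro w hw
    obtain ⟨v, hv, hδ⟩ := hnet w hw
    exact ⟨v, hv, by simpa only [hG] using toReal_eLpNorm_sum_mul_sub_sum_mul_le hp1 hF hL hFL hδ⟩
  have hψQ (j : DistinctPair p μ G B) :
      eLpNorm (ψ j) 2 μ ≤
        ENNReal.ofReal (probeNormBound p μ fun j : DistinctPair p μ G B => j.diff) := by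
    rw [hψ]
    exact eLpNorm_two_dualProbe_le_probeNormBound hp1 hp (fun j => ((hGp _).sub (hGp _)).1)
      (fun j => j.2.2.2) hfin j
  exact integral_eLpNorm_selection_sub_le hp hf hGp hnetp hε hε' hN hC hcard hψ
    (probeNormBound_nonneg _ _ _) hψQ hZ hκ hsel hmin hmeas

end ProbeSelection

instance isProbabilityMeasure_cubeMeasure (d : ℕ) : IsProbabilityMeasure (cubeMeasure d) := by
  constructor
  rw [cubeMeasure, Measure.restrict_apply_univ, Real.volume_Icc_pi]
  simp

/-- Corollary 4 of the paper: there are absolute constants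
`c, c' > 0` such that for the convex aggregation procedure with probe set
`Ψ̃_{Λ_ε}` and `card Λ_ε ≤ (c'/ε)^N`, the selected estimator satisfies
`E‖F̂ − f‖_p ≤ 3 min_λ ‖f − F_λ‖_p + c·Q₁(p)·ε·√(N ln(1/ε)) + 6Lε`. -/
theorem stmt_13 :
    ∃ c : ℝ, 0 < c ∧ ∃ c' : ℝ, 0 < c' ∧
    ∀ (d N : ℕ), 1 ≤ d → 1 ≤ N →
    ∀ p q : ℝ≥0∞, 1 ≤ p → p ≠ ⊤ → 1 / p + 1 / q = 1 →
    ∀ (f : (Fin d → ℝ) → ℝ) (F : Fin N → (Fin d → ℝ) → ℝ)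
      (FL : (Fin N → ℝ) → (Fin d → ℝ) → ℝ),
      (∀ lam t, FL lam t = ∑ i, lam i * F i t) →
      Measurable f → (∀ i, Measurable (F i)) →
    ∀ L : ℝ, 0 ≤ L →
      eLpNorm f p (cubeMeasure d) ≤ ENNReal.ofReal L →
      (∀ i, eLpNorm (F i) p (cubeMeasure d) ≤ ENNReal.ofReal L) →
    ∀ ε : ℝ, 0 < ε → ε < 1 / 2 →
    -- the finite `ε`-net `Λ_ε` of the simplex, of cardinality at most `(c'/ε)^N`
    ∀ Λε : Finset (Fin N → ℝ),
      (∀ lam ∈ Λε, lam ∈ simplex N) →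
      (∀ lam ∈ simplex N, ∃ lam' ∈ Λε, ∑ i, |lam i - lam' i| ≤ ε) →
      (Λε.card : ℝ) ≤ (c' / ε) ^ N →
      -- differences over the net have finite `L^{2p-2}` norms
      (∀ lam ∈ Λε, ∀ nu ∈ Λε, Lnorm p (fun t => FL lam t - FL nu t) ≠ 0 →
        eLpNorm (fun t => FL lam t - FL nu t) (2 * p - 2) (cubeMeasure d) ≠ ⊤) →
      (∃ lam ∈ Λε, ∃ nu ∈ Λε, Lnorm p (fun t => FL lam t - FL nu t) ≠ 0) →
    -- the probe functions `ψ_g = |g|^{p-1} sign(g) / ‖g‖_p^{p-1}`, `g ∈ G_{Λ_ε}`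
    ∀ ψ : (Fin N → ℝ) → (Fin N → ℝ) → (Fin d → ℝ) → ℝ,
      (∀ lam ∈ Λε, ∀ nu ∈ Λε, Lnorm p (fun t => FL lam t - FL nu t) ≠ 0 → ∀ t,
        ψ lam nu t = |FL lam t - FL nu t| ^ (p.toReal - 1) *
          Real.sign (FL lam t - FL nu t) /
          Lnorm p (fun u => FL lam u - FL nu u) ^ (p.toReal - 1)) →
    -- the Gaussian noise functionals
    ∀ (Ω : Type) (_ : MeasurableSpace Ω) (P : Measure Ω), IsProbabilityMeasure P →
    ∀ Z : (Fin N → ℝ) → (Fin N → ℝ) → Ω → ℝ,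
      (∀ lam nu, Measurable (Z lam nu)) →
      (∀ lam ∈ Λε, ∀ nu ∈ Λε, Lnorm p (fun t => FL lam t - FL nu t) ≠ 0 →
        Measure.map (Z lam nu) P = ProbabilityTheory.gaussianReal 0
          ((eLpNorm (ψ lam nu) 2 (cubeMeasure d)).toNNReal ^ 2)) →
      (∀ lam ∈ Λε, ∀ nu ∈ Λε, Lnorm p (fun t => FL lam t - FL nu t) ≠ 0 →
        ∀ᵐ ω ∂P, Z nu lam ω = - Z lam nu ω) →
    -- the selection procedure with `δ = ε`, `κ = √(2 ln(n_ε²/ε))`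
    ∀ κ : ℝ, κ = Real.sqrt (2 * Real.log ((Λε.card : ℝ) ^ 2 / ε)) →
    ∀ M : (Fin N → ℝ) → Ω → ℝ,
      (∀ lam ω, M lam ω =
        ⨆ pr : {pr : (Fin N → ℝ) × (Fin N → ℝ) //
            pr.1 ∈ Λε ∧ pr.2 ∈ Λε ∧ Lnorm p (fun t => FL pr.1 t - FL pr.2 t) ≠ 0},
          (|(∫ t, ψ pr.1.1 pr.1.2 t * (f t - FL lam t) ∂(cubeMeasure d)) +
              ε * Z pr.1.1 pr.1.2 ω| - ε * κ * Lnorm 2 (ψ pr.1.1 pr.1.2)) /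
            Lnorm q (ψ pr.1.1 pr.1.2)) →
    ∀ lamhat : Ω → Fin N → ℝ,
      (∀ ω, lamhat ω ∈ simplex N) →
      (∀ ω, ∀ lam ∈ simplex N, M (lamhat ω) ω ≤ M lam ω) →
      Measurable (fun ω => Lnorm p (fun t => FL (lamhat ω) t - f t)) →
    -- the constant `Q₁(p)`
    ∀ Q1 : ℝ,
      (p ≤ 2 → Q1 = 1) →
      (2 < p → Q1 =
        ⨆ pr : {pr : (Fin N → ℝ) × (Fin N → ℝ) //
            pr.1 ∈ Λε ∧ pr.2 ∈ Λε ∧ Lnorm p (fun t => FL pr.1 t - FL pr.2 t) ≠ 0},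
          (Lnorm (2 * p - 2) (fun t => FL pr.1.1 t - FL pr.1.2 t) /
            Lnorm p (fun t => FL pr.1.1 t - FL pr.1.2 t)) ^ (p.toReal - 1)) →
    ∫ ω, Lnorm p (fun t => FL (lamhat ω) t - f t) ∂P ≤
      3 * (⨅ lam : simplex N, Lnorm p (fun t => f t - FL lam.1 t))
        + c * Q1 * ε * Real.sqrt (N * Real.log (1 / ε))
        + 6 * L * ε := by
  have hlogb : 0 ≤ Real.logb 2 16 := Real.logb_nonneg one_lt_two (by norm_num)
  -- A maximal `ε`-separated subset of the simplex has at most `(1 + 2 / ε) ^ N ≤ (16 / ε) ^ N`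
  -- points, so nets of the required cardinality exist.
  refine ⟨4 * √(6 + 4 * Real.logb 2 16), by positivity, 16, by norm_num, ?_⟩
  intro d N _ hN p q _ hp hpq f F FL hFL hf hF L hL hfL hF_L ε hε hε2 Λε _ hnet hcard hfin _
    ψ hψ Ω _ P _ Z _ hZ _ κ hκ M hM lamhat hsel hmin hmeas Q1 hQ1 hQ1'
  have : q.HolderConjugate p := ENNReal.holderConjugate_iff.2 (by simpa [add_comm] using hpq)
  have hQ : Q1 = probeNormBound p (cubeMeasure d)
      fun j : DistinctPair p (cubeMeasure d) FL Λε => j.diff := by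
    unfold probeNormBound
    split_ifs with h
    exacts [hQ1 h, hQ1' (not_le.1 h)]
  have hrisk := (stmt_13_general hp ⟨hf.aestronglyMeasurable, hfL.trans_lt ENNReal.ofReal_lt_top⟩
    (fun i => (hF i).aestronglyMeasurable) hL hF_L hFL hnet hε hε2.le hN (by norm_num) hcard
    (fun j => hfin _ j.2.1 _ j.2.2.1 j.2.2.2) (ψ := fun j => ψ j.1.1 j.1.2)
    (fun j => funext (hψ _ j.2.1 _ j.2.2.1 j.2.2.2))
    (fun j => hasSubgaussianMGF_of_map_eq_gaussianReal (hZ _ j.2.1 _ j.2.2.1 j.2.2.2)) hκ hsel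
    (fun ω lam hlam => (hM _ ω).symm.trans_le ((hmin ω lam hlam).trans_eq (hM lam ω)))
    hmeas.aestronglyMeasurable).2
  rw [← hQ] at hrisk
  exact hrisk.trans (add_le_add le_rfl (by linarith [mul_nonneg hL hε.le]))
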